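/- arXiv:2308.13677 — 2 statements merged into one kernel-verified Lean document; each statement's English description precedes it below -/
import Mathlib

section
/- Let C be a pretriangulated category, let G and H be objects of C, and let a, b be natural numbers. If X ∈ ⟨{G}⟩ₐ, Y ∈ ⟨{H}⟩_b, and there is a distinguished triangle X → E → Y → X⟦1⟧ in C, then E ∈ ⟨{G ⊕ H}⟩ₐ₊_b, where G ⊕ H denotes the biproduct of G and H. -/
/-!
The usual proof uses associativity of `*`, that is, the octahedral axiom, which is not available in
a pretriangulated category. It is replaced here by a converse ghost lemma argument at the level
of morphisms.

Fix a class `P`. Call `f : E ⟶ T` `0`-killable if `f = 0`, and `(n+1)`-killable if there is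
`q : E ⟶ D` with `D ∈ P` such that `i ≫ f` is `n`-killable for every `i` with `i ≫ q = 0`
(equivalently, for the fibre of `q`). Killable morphisms form a two-sided ideal when `P` is closed
under sums, and three facts give the theorem.

* `Killable.id_of_level`: identities of objects of `⟨G⟩ₙ` are `n`-killable for `P = ⟨G⟩`.
* `Killable.trans`: killability is additive along extensions, by iterating the definition.
* `Killable.factors`: an `n`-killable morphism factors through an object of `⟨G⟩ₙ`. If the fibre
  `E₁ ⟶ E` of `q : E ⟶ D`, followed by `f`, factors through `V`, then `f` factors through an
  extension `W` of `D` by `V`, namely the one obtained by pushing `D ⟶ E₁⟦1⟧` forward along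
  `E₁ ⟶ V`; only the completion of morphisms of triangles is needed.

Hence the identity of an extension `E` of `Y` by `X` is `(a + b)`-killable, so `E` is a direct
summand of an object of `⟨G ⊞ H⟩ₐ₊_b`.
-/

open CategoryTheory Limits Pretriangulated

universe v v' u u'

namespace RouquierDim

variable {C : Type u} [Category.{v} C] [HasZeroObject C] [HasShift C ℤ]
  [Preadditive C] [∀ n : ℤ, (shiftFunctor C n).Additive] [Pretriangulated C]
  [HasBinaryBiproducts C]

/-- `star G₁ G₂` is the class of objects `E` that fit into a distinguished triangle
`A ⟶ E ⟶ D ⟶ A⟦1⟧` with `A ∈ G₁` and `D ∈ G₂`. -/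
def star (G₁ G₂ : Set C) : Set C :=
  {E | ∃ (A D : C) (f : A ⟶ E) (g : E ⟶ D) (h : D ⟶ A⟦(1 : ℤ)⟧),
    A ∈ G₁ ∧ D ∈ G₂ ∧ (Triangle.mk f g h ∈ distTriang C)}

/-- The smallest class of objects containing `G` that is closed under isomorphism,
finite direct sums, direct summands and shifts. -/
inductive closure (G : Set C) : C → Prop
  | of {X : C} (hX : X ∈ G) : closure G X
  | iso {X Y : C} (e : X ≅ Y) (hX : closure G X) : closure G Y
  | sum {X Y : C} (hX : closure G X) (hY : closure G Y) : closure G (X ⊞ Y)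
  | summand {X Z : C} (r : X ⟶ Z) (s : Z ⟶ X) (hrs : r ≫ s = 𝟙 X)
      (hZ : closure G Z) : closure G X
  | shift {X : C} (n : ℤ) (hX : closure G X) : closure G (X⟦n⟧)

/-- `⟨G⟩`, as a set of objects. -/
def cl (G : Set C) : Set C := {X | closure G X}

/-- `⟨G⟩ₖ`: `⟨G⟩₀` is the class of zero objects, and `⟨G⟩ₖ = ⟨⟨G⟩ₖ₋₁ * ⟨G⟩⟩`. -/
def level (G : Set C) : ℕ → Set C
  | 0 => {X | IsZero X}
  | (k + 1) => cl (star (level G k) (cl G))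

/-- The image `j(D)` of a class of objects `D` under a functor `j`:
objects isomorphic to `j(X)` for some `X ∈ D`. -/
def fimage {B : Type u'} [Category.{v'} B] (j : C ⥤ B) (D : Set C) : Set B :=
  {Y | ∃ X ∈ D, Nonempty (j.obj X ≅ Y)}

/-- The Rouquier dimension: the smallest `k` such that some object `G` generates
every object of `C` in time `k` (i.e. every object lies in `⟨{G}⟩ₖ₊₁`), and `∞`
if there is no such `k`. -/
noncomputable def rdim (C : Type u) [Category.{v} C] [HasZeroObject C] [HasShift C ℤ]
    [Preadditive C] [∀ n : ℤ, (shiftFunctor C n).Additive] [Pretriangulated C]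
    [HasBinaryBiproducts C] : ℕ∞ :=
  sInf {k : ℕ∞ | ∃ n : ℕ, k = (n : ℕ∞) ∧ ∃ G : C, ∀ X : C, X ∈ level {G} (n + 1)}


set_option linter.unusedSectionVars false

/-- `Killable P n f` says that `f : E ⟶ T` can be annihilated in `n` steps by passing to fibres of
morphisms to objects of `P`. Quantifying over all `i` with `i ≫ q = 0` instead of choosing a fibre
of `q` keeps triangles out of the definition. -/
def Killable (P : Set C) : ℕ → ∀ {E T : C}, (E ⟶ T) → Prop
  | 0, _, _, f => f = 0
  | n + 1, E, _, f => ∃ (D : C) (q : E ⟶ D), D ∈ P ∧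
      ∀ (E₁ : C) (i : E₁ ⟶ E), i ≫ q = 0 → Killable P n (i ≫ f)

theorem Killable.precomp {P : Set C} {n : ℕ} {E' E T : C} (g : E' ⟶ E) {f : E ⟶ T}
    (hf : Killable P n f) : Killable P n (g ≫ f) := by
  cases n with
  | zero =>
    have hf : f = 0 := hf
    simp [Killable, hf]
  | succ n =>
    obtain ⟨D, q, hD, hq⟩ := hf
    refine ⟨D, g ≫ q, hD, fun E₁ i hi => ?_⟩
    simpa using hq E₁ (i ≫ g) (by simpa using hi)

theorem Killable.postcomp {P : Set C} {n : ℕ} {E T T' : C} {f : E ⟶ T}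
    (hf : Killable P n f) (g : T ⟶ T') : Killable P n (f ≫ g) := by
  induction n generalizing E with
  | zero =>
    have hf : f = 0 := hf
    simp [Killable, hf]
  | succ n ih =>
    obtain ⟨D, q, hD, hq⟩ := hf
    refine ⟨D, q, hD, fun E₁ i hi => ?_⟩
    simpa using ih (hq E₁ i hi)

theorem Killable.mono {P Q : Set C} (hPQ : P ⊆ Q) {n : ℕ} {E T : C} {f : E ⟶ T}
    (hf : Killable P n f) : Killable Q n f := by
  induction n generalizing E with
  | zero => exact hf
  | succ n ih =>
    obtain ⟨D, q, hD, hq⟩ := hf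
    exact ⟨D, q, hPQ hD, fun E₁ i hi => ih (hq E₁ i hi)⟩

theorem Killable.add {G : Set C} {n : ℕ} {E T : C} {f f' : E ⟶ T}
    (hf : Killable (cl G) n f) (hf' : Killable (cl G) n f') :
    Killable (cl G) n (f + f') := by
  induction n generalizing E with
  | zero =>
    have hf : f = 0 := hf
    have hf' : f' = 0 := hf'
    simp [Killable, hf, hf']
  | succ n ih =>
    obtain ⟨D, q, hD, hq⟩ := hf
    obtain ⟨D', q', hD', hq'⟩ := hf'
    refine ⟨D ⊞ D', biprod.lift q q', closure.sum hD hD', fun E₁ i hi => ?_⟩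
    have h₁ : i ≫ q = 0 := by simpa using congrArg (fun k => k ≫ biprod.fst) hi
    have h₂ : i ≫ q' = 0 := by simpa using congrArg (fun k => k ≫ biprod.snd) hi
    rw [Preadditive.comp_add]
    exact ih (hq E₁ i h₁) (hq' E₁ i h₂)

theorem Killable.shift {G : Set C} {n : ℕ} {E T : C} {f : E ⟶ T}
    (hf : Killable (cl G) n f) (m : ℤ) : Killable (cl G) n (f⟦m⟧') := by
  induction n generalizing E with
  | zero =>
    have hf : f = 0 := hf
    simp [Killable, hf]
  | succ n ih =>
    obtain ⟨D, q, hD, hq⟩ := hf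
    refine ⟨D⟦m⟧, q⟦m⟧', closure.shift m hD, fun E₁ i hi => ?_⟩
    -- As the shift is an equivalence, `i` is, up to isomorphism, the shift of some `j`.
    let e := (shiftFunctor C m).objObjPreimageIso E₁
    obtain ⟨j, hj⟩ := (shiftFunctor C m).map_surjective (e.hom ≫ i)
    have hi' : i = e.inv ≫ j⟦m⟧' := by simp [hj]
    have hjq : j ≫ q = 0 := by
      apply (shiftFunctor C m).map_injective
      rw [Functor.map_comp, hj, Category.assoc, hi, comp_zero, Functor.map_zero]
    have := (ih (hq _ j hjq)).precomp e.inv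
    rwa [Functor.map_comp, ← Category.assoc, ← hi'] at this

/-- Killing `q` in `b` steps leaves morphisms `i` with `i ≫ q = 0`; if `f` can then be killed
in `a` further steps, it is killed in `a + b` steps altogether. -/
theorem Killable.trans {P : Set C} {a b : ℕ} {E Y T : C} {q : E ⟶ Y} {f : E ⟶ T}
    (hq : Killable P b q)
    (hf : ∀ (E₁ : C) (i : E₁ ⟶ E), i ≫ q = 0 → Killable P a (i ≫ f)) :
    Killable P (a + b) f := by
  induction b generalizing E with
  | zero =>
    have hq : q = 0 := hq
    simpa using hf E (𝟙 E) (by simp [hq])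
  | succ b ih =>
    obtain ⟨D, r, hD, hr⟩ := hq
    refine ⟨D, r, hD, fun E₁ i hi => ih (hr E₁ i hi) fun E₂ j hj => ?_⟩
    simpa using hf E₂ (j ≫ i) (by simpa using hj)

theorem Killable.id_of_closure {G S : Set C} {n : ℕ}
    (hS : ∀ X ∈ S, Killable (cl G) n (𝟙 X)) {X : C} (hX : closure S X) :
    Killable (cl G) n (𝟙 X) := by
  induction hX with
  | of hX => exact hS _ hX
  | iso e _ ih => simpa using (ih.precomp e.inv).postcomp e.hom
  | sum _ _ ih₁ ih₂ =>
    rw [← biprod.total]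
    simpa using ((ih₁.precomp biprod.fst).postcomp biprod.inl).add
      ((ih₂.precomp biprod.snd).postcomp biprod.inr)
  | summand r s hrs _ ih => simpa [hrs] using (ih.precomp r).postcomp s
  | shift m _ ih => simpa using ih.shift m

theorem Killable.id_of_level {G : Set C} {n : ℕ} {X : C} (hX : X ∈ level G n) :
    Killable (cl G) n (𝟙 X) := by
  induction n generalizing X with
  | zero => exact IsZero.eq_of_src hX _ _
  | succ n ih =>
    refine Killable.id_of_closure ?_ hX
    rintro E ⟨A, D, f, g, h, hA, hD, hT⟩
    refine ⟨D, g, hD, fun E₁ i hi => ?_⟩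
    obtain ⟨j, hj⟩ : ∃ j : E₁ ⟶ A, i = j ≫ f := Triangle.coyoneda_exact₂ _ hT i hi
    simpa [hj] using ((ih hA).precomp j).postcomp f

/-- Converse of the ghost lemma without the octahedral axiom: `f` factors through an extension `W`
of `D` by an object `V` of `⟨G⟩ₙ` through which `f` factors on the fibre of `q : E ⟶ D`. -/
theorem Killable.factors {G : Set C} {n : ℕ} {E T : C} {f : E ⟶ T}
    (hf : Killable (cl G) n f) :
    ∃ (W : C) (r : E ⟶ W) (s : W ⟶ T), W ∈ level G n ∧ f = r ≫ s := by
  induction n generalizing E with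
  | zero =>
    have hf : f = 0 := hf
    exact ⟨_, 0, 0, isZero_zero C, by simp [hf]⟩
  | succ n ih =>
    obtain ⟨D, q, hD, hq⟩ := hf
    obtain ⟨E₁, i, d, hT⟩ := distinguished_cocone_triangle₁ q
    obtain ⟨V, u, v, hV, huv⟩ := ih (hq E₁ i (comp_distTriang_mor_zero₁₂ _ hT))
    obtain ⟨W, α, β, hW⟩ := distinguished_cocone_triangle₂ (d ≫ u⟦(1 : ℤ)⟧')
    obtain ⟨c, hc₁, hc₂⟩ : ∃ c : E ⟶ W, i ≫ c = u ≫ α ∧ q ≫ 𝟙 D = c ≫ β :=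
      complete_distinguished_triangle_morphism₂ _ _ hT hW u (𝟙 D) (Category.id_comp _).symm
    have hdi : d ≫ i⟦(1 : ℤ)⟧' = 0 := comp_distTriang_mor_zero₃₁ _ hT
    -- `v` extends along `α : V ⟶ W` because `D ⟶ V⟦1⟧ ⟶ T⟦1⟧` factors through
    -- `D ⟶ E₁⟦1⟧ ⟶ E⟦1⟧`.
    have hduv : (d ≫ u⟦(1 : ℤ)⟧') ≫ v⟦(1 : ℤ)⟧' = 0 := by
      rw [Category.assoc, ← Functor.map_comp, ← huv, Functor.map_comp, reassoc_of% hdi, zero_comp]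
    obtain ⟨w, hw⟩ : ∃ w : W ⟶ T, α ≫ w = v ≫ 𝟙 T := by
      obtain ⟨w, hw, -⟩ := complete_distinguished_triangle_morphism₂ _ _ hW
        (contractible_distinguished T) v 0 (hduv.trans zero_comp.symm)
      exact ⟨w, hw⟩
    rw [Category.comp_id] at hc₂ hw
    -- `f` and `c ≫ w` agree on the fibre `E₁`, hence differ by a morphism factoring through `q`,
    -- which itself factors through `c`.
    have hfw : i ≫ (f - c ≫ w) = 0 := by
      rw [Preadditive.comp_sub, huv, ← Category.assoc, hc₁, Category.assoc, hw, sub_self]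
    obtain ⟨t, ht⟩ : ∃ t : D ⟶ T, f - c ≫ w = q ≫ t := Triangle.yoneda_exact₂ _ hT _ hfw
    refine ⟨W, c, w + β ≫ t, closure.of ⟨V, D, α, β, _, hV, hD, hW⟩, ?_⟩
    rw [Preadditive.comp_add, ← Category.assoc, ← hc₂, ← ht]
    abel

theorem level_summand {G : Set C} {n : ℕ} {X Z : C} (r : X ⟶ Z) (s : Z ⟶ X)
    (hrs : r ≫ s = 𝟙 X) (hZ : Z ∈ level G n) : X ∈ level G n := by
  cases n with
  | zero =>
    have hr : r = 0 := IsZero.eq_of_tgt hZ _ _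
    exact (IsZero.iff_id_eq_zero X).2 (by rw [← hrs, hr, zero_comp])
  | succ n => exact closure.summand r s hrs hZ

theorem cl_subset_cl {S S' : Set C} (h : S ⊆ cl S') : cl S ⊆ cl S' := by
  intro X hX
  induction hX with
  | of hX => exact h hX
  | iso e _ ih => exact closure.iso e ih
  | sum _ _ ih₁ ih₂ => exact closure.sum ih₁ ih₂
  | summand r s hrs _ ih => exact closure.summand r s hrs ih
  | shift m _ ih => exact closure.shift m ih

/-- if `X ∈ ⟨{G}⟩ₐ`, `Y ∈ ⟨{H}⟩_b` and there is a distinguished triangle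
`X ⟶ E ⟶ Y ⟶ X⟦1⟧`, then `E ∈ ⟨{G ⊞ H}⟩ₐ₊_b`. -/
theorem statement3 (G H : C) (a b : ℕ) (X Y E : C)
    (hX : X ∈ level {G} a) (hY : Y ∈ level {H} b)
    (f : X ⟶ E) (g : E ⟶ Y) (h : Y ⟶ X⟦(1 : ℤ)⟧)
    (hT : Triangle.mk f g h ∈ distTriang C) :
    E ∈ level {G ⊞ H} (a + b) := by
  have hG : cl {G} ⊆ cl {G ⊞ H} := cl_subset_cl (Set.singleton_subset_iff.2
    (closure.summand biprod.inl biprod.fst (by simp) (closure.of rfl)))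
  have hH : cl {H} ⊆ cl {G ⊞ H} := cl_subset_cl (Set.singleton_subset_iff.2
    (closure.summand biprod.inr biprod.snd (by simp) (closure.of rfl)))
  have kX := (Killable.id_of_level hX).mono hG
  have kY := (Killable.id_of_level hY).mono hH
  have kg : Killable (cl {G ⊞ H}) b g := by simpa using kY.precomp g
  have kE : Killable (cl {G ⊞ H}) (a + b) (𝟙 E) := kg.trans fun E₁ i hi => by
    obtain ⟨j, hj⟩ : ∃ j : E₁ ⟶ X, i = j ≫ f := Triangle.coyoneda_exact₂ _ hT i hi
    simpa [hj] using (kX.precomp j).postcomp f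
  obtain ⟨W, r, s, hW, hrs⟩ := kE.factors
  exact level_summand r s hrs.symm hW

end RouquierDim
end

section
/- (Depth-one case of the triangulated Lusternik–Schnirelmann bound.) Let C be a pretriangulated category, let j₁ : A₁ → C and j₂ : A₂ → C be exact (triangulated) functors from pretriangulated categories, let G₁, G₂ be objects of C, and let k₁, k₂ be natural numbers such that for every object X of A₁ one has j₁(X) ∈ ⟨{G₁}⟩ₖ₁₊₁ and for every object Y of A₂ one has j₂(Y) ∈ ⟨{G₂}⟩ₖ₂₊₁. If every object of C lies in ⟨⟨Im j₁⟩ * ⟨Im j₂⟩⟩, where Im jᵢ denotes the essential image of jᵢ, then every object of C lies in ⟨{G₁ ⊕ G₂}⟩ₖ₁₊ₖ₂₊₂. In particular Rdim(C) ≤ k₁ + k₂ + 1. -/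
/-!
The point is that `⟨G⟩ₐ * ⟨G⟩_b ⊆ ⟨G⟩ₐ₊_b`. In a triangulated category this is associativity of
`*`, a consequence of the octahedral axiom. That axiom is not available here, but associativity
up to direct summands is enough, and it holds in any pretriangulated category.

Let `A → E → D` and `B → D → B'` be distinguished, let `F` be the fibre of `E → D → B'`, and let
`F'` be the fibre of `B → D → A⟦1⟧`. Then `F' ∈ A * B`, and a diagram chase shows that `F` and
`F'` are both weak kernels of `E → B'`. So there are maps `F → F'` and `F' → F` over `E`, and
`𝟙 F` differs from the composite `F → F' → F` by a map factoring through `B'⟦-1⟧`. Therefore `F`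
is a retract of `F' ⊞ B'⟦-1⟧`, while `E ∈ F * B'` (`exists_retract_of_two_triangles`). With
`A ∈ ⟨G⟩ₐ`, `B ∈ ⟨G⟩_b` and `B' ∈ ⟨G⟩`, induction on `b` gives `F' ∈ ⟨G⟩ₐ₊_b`, so
`F ∈ ⟨G⟩ₐ₊_b` and `E ∈ ⟨G⟩ₐ₊_b₊₁`. An object of `⟨G⟩_b₊₁` is only a retract of such a `D`
(`exists_retract_of_mem_level_succ`); the five lemma handles retracts
(`mem_star_retract`).

For the theorem, `⟨Im jᵢ⟩ ⊆ ⟨Gᵢ⟩ ⊆ ⟨G₁ ⊞ G₂⟩` at stage `kᵢ + 1`, and the inclusion above applies.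
-/

open CategoryTheory Limits Pretriangulated

universe v v' u u'

namespace RouquierDim

variable {C : Type u} [Category.{v} C] [HasZeroObject C] [HasShift C ℤ]
  [Preadditive C] [∀ n : ℤ, (shiftFunctor C n).Additive] [Pretriangulated C]
  [HasBinaryBiproducts C]

set_option linter.unusedSectionVars false

/-! ### Closure properties of `⟨G⟩` and `⟨G⟩ₖ` -/

lemma mem_star_of_distTriang {G₁ G₂ : Set C} (T : Triangle C) (hT : T ∈ distTriang C)
    (h₁ : T.obj₁ ∈ G₁) (h₃ : T.obj₃ ∈ G₂) : T.obj₂ ∈ star G₁ G₂ :=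
  ⟨T.obj₁, T.obj₃, T.mor₁, T.mor₂, T.mor₃, h₁, h₃, hT⟩

lemma star_mono {G₁ G₂ H₁ H₂ : Set C} (h₁ : G₁ ⊆ H₁) (h₂ : G₂ ⊆ H₂) :
    star G₁ G₂ ⊆ star H₁ H₂ := by
  rintro E ⟨A, D, f, g, h, hA, hD, hT⟩
  exact ⟨A, D, f, g, h, h₁ hA, h₂ hD, hT⟩

lemma subset_cl (G : Set C) : G ⊆ cl G := fun _ hX => closure.of hX

/-- A class of objects closed under isomorphisms, binary sums, retracts and shifts. -/
structure IsThickish (P : Set C) : Prop where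
  iso {X Y : C} (e : X ≅ Y) (hX : X ∈ P) : Y ∈ P
  sum {X Y : C} (hX : X ∈ P) (hY : Y ∈ P) : (X ⊞ Y) ∈ P
  summand {X Z : C} (r : X ⟶ Z) (s : Z ⟶ X) (hrs : r ≫ s = 𝟙 X) (hZ : Z ∈ P) : X ∈ P
  shift {X : C} (n : ℤ) (hX : X ∈ P) : X⟦n⟧ ∈ P

lemma isThickish_cl (G : Set C) : IsThickish (cl G) where
  iso e hX := closure.iso e hX
  sum hX hY := closure.sum hX hY
  summand r s hrs hZ := closure.summand r s hrs hZ
  shift n hX := closure.shift n hX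

lemma cl_subset {G P : Set C} (hP : IsThickish P) (h : G ⊆ P) : cl G ⊆ P := by
  intro X hX
  induction hX with
  | of hX => exact h hX
  | iso e _ ih => exact hP.iso e ih
  | sum _ _ ih₁ ih₂ => exact hP.sum ih₁ ih₂
  | summand r s hrs _ ih => exact hP.summand r s hrs ih
  | shift n _ ih => exact hP.shift n ih

lemma cl_mono {G H : Set C} (h : G ⊆ H) : cl G ⊆ cl H :=
  cl_subset (isThickish_cl H) (h.trans (subset_cl H))

lemma isThickish_level (G : Set C) : ∀ k : ℕ, IsThickish (level G k)
  | 0 =>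
    { iso := fun e hX => IsZero.of_iso hX e.symm
      sum := fun hX hY => (biprod_isZero_iff _ _).2 ⟨hX, hY⟩
      summand := fun r s hrs hZ => by
        rw [level, Set.mem_ofPred_eq, IsZero.iff_id_eq_zero, ← hrs, hZ.eq_of_tgt r 0, zero_comp]
      shift := fun n hX => (shiftFunctor C n).map_isZero hX }
  | k + 1 => isThickish_cl _

lemma IsThickish.isZero_mem {P : Set C} (hP : IsThickish P) {X Z : C} (hX : X ∈ P)
    (hZ : IsZero Z) : Z ∈ P :=
  hP.summand 0 0 (hZ.eq_of_src _ _) hX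

lemma level_subset_succ (G : C) (k : ℕ) : level {G} k ⊆ level {G} (k + 1) := fun X hX =>
  closure.of (mem_star_of_distTriang _ (contractible_distinguished X) hX
    ((isThickish_cl {G}).isZero_mem (closure.of (Set.mem_singleton G)) (isZero_zero C)))

lemma cl_subset_level_succ (G : C) (k : ℕ) : cl {G} ⊆ level {G} (k + 1) := by
  intro X hX
  refine closure.of (mem_star_of_distTriang _ (contractible_distinguished₁ X) ?_ hX)
  have key : ∀ (k : ℕ) (Z : C), IsZero Z → Z ∈ level {G} k := fun k => by
    induction k with
    | zero => exact fun _ hZ => hZ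
    | succ k ih => exact fun Z hZ => level_subset_succ G k (ih Z hZ)
  exact key k _ (isZero_zero C)

lemma level_mono {G H : Set C} (h : cl G ⊆ cl H) (k : ℕ) : level G k ⊆ level H k := by
  induction k with
  | zero => exact subset_rfl
  | succ k ih => exact cl_mono (star_mono ih h)

/-! ### Objects of `⟨P * Q⟩` as retracts of objects of `P * Q` -/

/-- The two models of a binary sum: the biproduct, and the product over `WalkingPair`. -/
noncomputable def biprodIsoPi (f : WalkingPair → C) :
    f .left ⊞ f .right ≅ ∏ᶜ f :=
  biprod.isoProd _ _ ≪≫ (HasLimit.isoOfNatIso (diagramIsoPair (Discrete.functor f))).symm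

lemma star_sum {P Q : Set C} (hP : IsThickish P) (hQ : IsThickish Q) {X Y : C}
    (hX : X ∈ star P Q) (hY : Y ∈ star P Q) :
    ∃ Z ∈ star P Q, Nonempty (X ⊞ Y ≅ Z) := by
  obtain ⟨A, D, f, g, h, hA, hD, hT⟩ := hX
  obtain ⟨A', D', f', g', h', hA', hD', hT'⟩ := hY
  let T : WalkingPair → Triangle C := fun j =>
    WalkingPair.casesOn j (Triangle.mk f g h) (Triangle.mk f' g' h')
  have hTj : ∀ j, T j ∈ distTriang C := by rintro (_ | _) <;> assumption
  exact ⟨_, mem_star_of_distTriang _ (productTriangle_distinguished T hTj)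
    (hP.iso (biprodIsoPi fun j => (T j).obj₁) (hP.sum hA hA'))
    (hQ.iso (biprodIsoPi fun j => (T j).obj₃) (hQ.sum hD hD')),
    ⟨biprodIsoPi fun j => (T j).obj₂⟩⟩

lemma star_shift {P Q : Set C} (hP : IsThickish P) (hQ : IsThickish Q) {X : C} (n : ℤ)
    (hX : X ∈ star P Q) : X⟦n⟧ ∈ star P Q := by
  obtain ⟨A, D, f, g, h, hA, hD, hT⟩ := hX
  exact mem_star_of_distTriang _ (Triangle.shift_distinguished _ hT n) (hP.shift n hA)
    (hQ.shift n hD)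

/-- As `P * Q` is already closed under sums and shifts, `⟨P * Q⟩` only adds retracts. -/
lemma exists_retract_of_mem_cl_star {P Q : Set C} (hP : IsThickish P) (hQ : IsThickish Q)
    {X : C} (hX : X ∈ cl (star P Q)) :
    ∃ Z ∈ star P Q, ∃ (r : X ⟶ Z) (s : Z ⟶ X), r ≫ s = 𝟙 X := by
  induction hX with
  | of hX => exact ⟨_, hX, 𝟙 _, 𝟙 _, by simp⟩
  | iso e _ ih =>
    obtain ⟨Z, hZ, r, s, hrs⟩ := ih
    exact ⟨Z, hZ, e.inv ≫ r, s ≫ e.hom, by simp [reassoc_of% hrs]⟩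
  | sum _ _ ih₁ ih₂ =>
    obtain ⟨Z, hZ, r, s, hrs⟩ := ih₁
    obtain ⟨Z', hZ', r', s', hrs'⟩ := ih₂
    obtain ⟨W, hW, ⟨e⟩⟩ := star_sum hP hQ hZ hZ'
    refine ⟨W, hW, biprod.map r r' ≫ e.hom, e.inv ≫ biprod.map s s', ?_⟩
    ext <;> simp [hrs, hrs']
  | summand r s hrs _ ih =>
    obtain ⟨Z, hZ, r', s', hrs'⟩ := ih
    exact ⟨Z, hZ, r ≫ r', s' ≫ s, by simp [reassoc_of% hrs', hrs]⟩
  | shift n _ ih =>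
    obtain ⟨Z, hZ, r, s, hrs⟩ := ih
    exact ⟨_, star_shift hP hQ n hZ, r⟦n⟧', s⟦n⟧', by
      rw [← Functor.map_comp, hrs, CategoryTheory.Functor.map_id]⟩

lemma exists_retract_of_mem_level_succ {G : Set C} {k : ℕ} {X : C} (hX : X ∈ level G (k + 1)) :
    ∃ Z ∈ star (level G k) (cl G), ∃ (r : X ⟶ Z) (s : Z ⟶ X), r ≫ s = 𝟙 X :=
  exists_retract_of_mem_cl_star (isThickish_level G k) (isThickish_cl G) hX

/-! ### Associativity of `*` up to direct summands -/

lemma exists_middle_map {A E D E' D' : C} {f : A ⟶ E} {g : E ⟶ D} {h : D ⟶ A⟦(1 : ℤ)⟧}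
    (hT : Triangle.mk f g h ∈ distTriang C) {f' : A ⟶ E'} {g' : E' ⟶ D'}
    {h' : D' ⟶ A⟦(1 : ℤ)⟧} (hT' : Triangle.mk f' g' h' ∈ distTriang C)
    (c : D ⟶ D') (hc : c ≫ h' = h) :
    ∃ b : E ⟶ E', f ≫ b = f' ∧ g ≫ c = b ≫ g' := by
  have comm : h ≫ (𝟙 A)⟦(1 : ℤ)⟧' = c ≫ h' := by
    rw [CategoryTheory.Functor.map_id, Category.comp_id, hc]
  obtain ⟨b, hb₁, hb₂⟩ := complete_distinguished_triangle_morphism₂ _ _ hT hT' (𝟙 A) c comm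
  exact ⟨b, hb₁.trans (Category.id_comp f'), hb₂⟩

lemma isIso_middle_map {A E D : C} {f : A ⟶ E} {g : E ⟶ D} {h : D ⟶ A⟦(1 : ℤ)⟧}
    (hT : Triangle.mk f g h ∈ distTriang C) (c : E ⟶ E) (h₁ : f ≫ c = f) (h₂ : c ≫ g = g) :
    IsIso c := by
  have c₁ : f ≫ c = 𝟙 A ≫ f := by rw [h₁, Category.id_comp]
  have c₂ : g ≫ 𝟙 D = c ≫ g := by rw [h₂, Category.comp_id]
  have c₃ : h ≫ (𝟙 A)⟦(1 : ℤ)⟧' = 𝟙 D ≫ h := by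
    rw [CategoryTheory.Functor.map_id, Category.comp_id, Category.id_comp]
  exact isIso₂_of_isIso₁₃ (Triangle.homMk (Triangle.mk f g h) (Triangle.mk f g h)
    (𝟙 A) c (𝟙 D) c₁ c₂ c₃) hT hT
    (inferInstanceAs (IsIso (𝟙 A))) (inferInstanceAs (IsIso (𝟙 D)))

lemma exists_lift₂ {A E D X : C} {f : A ⟶ E} {g : E ⟶ D} {h : D ⟶ A⟦(1 : ℤ)⟧}
    (hT : Triangle.mk f g h ∈ distTriang C) (x : X ⟶ E) (hx : x ≫ g = 0) :
    ∃ y : X ⟶ A, x = y ≫ f :=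
  Triangle.coyoneda_exact₂ _ hT x hx

lemma exists_lift₃ {A E D X : C} {f : A ⟶ E} {g : E ⟶ D} {h : D ⟶ A⟦(1 : ℤ)⟧}
    (hT : Triangle.mk f g h ∈ distTriang C) (x : X ⟶ D) (hx : x ≫ h = 0) :
    ∃ y : X ⟶ E, x = y ≫ g :=
  Triangle.coyoneda_exact₃ _ hT x hx

/-- Maps into the first object that vanish in the second factor through the connecting map
from the shifted third object. -/
lemma exists_lift₁ {A E D : C} {f : A ⟶ E} {g : E ⟶ D} {h : D ⟶ A⟦(1 : ℤ)⟧}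
    (hT : Triangle.mk f g h ∈ distTriang C) :
    ∃ z : D⟦(-1 : ℤ)⟧ ⟶ A, ∀ {X : C} (x : X ⟶ A), x ≫ f = 0 →
      ∃ y : X ⟶ D⟦(-1 : ℤ)⟧, x = y ≫ z :=
  ⟨(Triangle.mk f g h).invRotate.mor₁, fun x hx =>
    Triangle.coyoneda_exact₂ _ (inv_rot_of_distTriang _ hT) x hx⟩

/-- If `E` is an extension of `D` by `A` and `D` is a retract of `D'`, then `E` is a retract
of an extension of `D'` by `A`. -/
lemma mem_star_retract {A E D D' : C} {f : A ⟶ E} {g : E ⟶ D} {h : D ⟶ A⟦(1 : ℤ)⟧}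
    (hT : Triangle.mk f g h ∈ distTriang C) (r : D ⟶ D') (s : D' ⟶ D) (hrs : r ≫ s = 𝟙 D) :
    ∃ E' ∈ star {A} {D'}, ∃ (r' : E ⟶ E') (s' : E' ⟶ E), r' ≫ s' = 𝟙 E := by
  obtain ⟨E', f', g', hT'⟩ := distinguished_cocone_triangle₂ (s ≫ h)
  obtain ⟨a, ha₁, ha₂⟩ := exists_middle_map hT hT' r (by rw [reassoc_of% hrs])
  obtain ⟨b, hb₁, hb₂⟩ := exists_middle_map hT' hT s rfl
  -- `a ≫ b` need not be the identity, but it is an isomorphism by the five lemma.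
  have : IsIso (a ≫ b) := isIso_middle_map hT _ (by rw [reassoc_of% ha₁, hb₁])
    (by rw [Category.assoc, ← hb₂, ← reassoc_of% ha₂, hrs, Category.comp_id])
  exact ⟨E', ⟨A, D', f', g', s ≫ h, rfl, rfl, hT'⟩, a, b ≫ inv (a ≫ b), by
    rw [← Category.assoc, IsIso.hom_inv_id]⟩

/-- Associativity of `*` up to direct summands, without the octahedral axiom: if
`E ∈ A * (B * B')`, then `E` is an extension of `B'` by a retract of `F' ⊞ B'⟦-1⟧`
for some `F' ∈ A * B`. -/
lemma exists_retract_of_two_triangles {A E D B B' : C}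
    {f : A ⟶ E} {g : E ⟶ D} {h : D ⟶ A⟦(1 : ℤ)⟧} (hT : Triangle.mk f g h ∈ distTriang C)
    {u : B ⟶ D} {v : D ⟶ B'} {w : B' ⟶ B⟦(1 : ℤ)⟧} (hS : Triangle.mk u v w ∈ distTriang C) :
    ∃ F, E ∈ star {F} {B'} ∧ ∃ F' ∈ star {A} {B},
      ∃ (r : F ⟶ F' ⊞ B'⟦(-1 : ℤ)⟧) (s : F' ⊞ B'⟦(-1 : ℤ)⟧ ⟶ F), r ≫ s = 𝟙 F := by
  obtain ⟨F, i, δ, hF⟩ := distinguished_cocone_triangle₁ (g ≫ v)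
  obtain ⟨F', f', g', hF'⟩ := distinguished_cocone_triangle₂ (u ≫ h)
  have huv : u ≫ v = 0 := comp_distTriang_mor_zero₁₂ _ hS
  have hgh : g ≫ h = 0 := comp_distTriang_mor_zero₂₃ _ hT
  have higv : i ≫ g ≫ v = 0 := comp_distTriang_mor_zero₁₂ _ hF
  obtain ⟨p, hp₁, hp₂⟩ := exists_middle_map hF' hT u rfl
  obtain ⟨q, hq⟩ := exists_lift₂ hF p (by
    rw [← Category.assoc, ← hp₂, Category.assoc, huv, comp_zero])
  obtain ⟨t, ht⟩ := exists_lift₂ hS (i ≫ g) (by rw [Category.assoc, higv])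
  obtain ⟨t', ht'⟩ := exists_lift₃ hF' t (by
    rw [← Category.assoc, ← ht, Category.assoc, hgh, comp_zero])
  -- `t' ≫ p` and `i` agree after `g`; correcting `t'` by a map through `A` lifts `i` along `p`.
  obtain ⟨c, hc⟩ := exists_lift₂ hT (t' ≫ p - i) (by
    rw [Preadditive.sub_comp, Category.assoc, ← hp₂, ← Category.assoc, ← ht', ht, sub_self])
  have hm : (t' - c ≫ f') ≫ p = i := by
    rw [Preadditive.sub_comp, Category.assoc, hp₁, ← hc]; abel
  obtain ⟨z, hz⟩ := exists_lift₁ hF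
  obtain ⟨x, hx⟩ := hz (𝟙 F - (t' - c ≫ f') ≫ q) (by
    rw [Preadditive.sub_comp, Category.assoc, ← hq, hm, Category.id_comp, sub_self])
  refine ⟨F, ⟨F, B', i, g ≫ v, δ, rfl, rfl, hF⟩, F', ⟨A, B, f', g', u ≫ h, rfl, rfl, hF'⟩,
    biprod.lift (t' - c ≫ f') x, biprod.desc q z, ?_⟩
  rw [biprod.lift_desc, ← hx]
  abel

/-! ### The inclusion `⟨G⟩ₐ * ⟨G⟩_b ⊆ ⟨G⟩ₐ₊_b` and the theorem -/

lemma star_level_level (G : C) (a b : ℕ) :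
    star (level {G} (a + 1)) (level {G} b) ⊆ level {G} (a + 1 + b) := by
  induction b with
  | zero =>
    rintro E ⟨A, D, f, g, h, hA, hD, hT⟩
    have : IsIso f := (Triangle.isZero₃_iff_isIso₁ _ hT).1 hD
    exact (isThickish_level {G} (a + 1)).iso (asIso f) hA
  | succ b ih =>
    rintro E ⟨A, D, f, g, h, hA, hD, hT⟩
    obtain ⟨D', hD', r, s, hrs⟩ := exists_retract_of_mem_level_succ hD
    obtain ⟨E', ⟨_, _, f', g', h', rfl, rfl, hT'⟩, r', s', hrs'⟩ := mem_star_retract hT r s hrs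
    refine (isThickish_level {G} (a + 1 + (b + 1))).summand r' s' hrs' ?_
    obtain ⟨B, B', u, v, w, hB, hB', hS⟩ := hD'
    obtain ⟨F, hE, F', hF', r, s, hrs⟩ := exists_retract_of_two_triangles hT' hS
    have hF'mem : F' ∈ level {G} (a + 1 + b) :=
      ih (star_mono (Set.singleton_subset_iff.2 hA) (Set.singleton_subset_iff.2 hB) hF')
    -- `⟨G⟩ ⊆ ⟨G⟩ₐ₊₁₊_b`: this is where the left index has to be positive.
    have hB'mem : B'⟦(-1 : ℤ)⟧ ∈ level {G} (a + 1 + b) := by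
      rw [show a + 1 + b = a + b + 1 by omega]
      exact cl_subset_level_succ G _ (closure.shift _ hB')
    have hF : F ∈ level {G} (a + 1 + b) :=
      (isThickish_level {G} _).summand r s hrs ((isThickish_level {G} _).sum hF'mem hB'mem)
    exact closure.of
      (star_mono (Set.singleton_subset_iff.2 hF) (Set.singleton_subset_iff.2 hB') hE)

lemma cl_essImage_subset_level {A : Type*} [Category* A] (j : A ⥤ C) {G H : C} {k : ℕ}
    (hG : G ∈ cl {H}) (hj : ∀ X : A, j.obj X ∈ level {G} k) :
    cl j.essImage ⊆ level {H} k := by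
  refine cl_subset (isThickish_level _ _) ?_
  rintro X ⟨Y, ⟨e⟩⟩
  exact (isThickish_level _ _).iso e
    (level_mono (cl_subset (isThickish_cl _) (Set.singleton_subset_iff.2 hG)) k (hj Y))

variable {A₁ : Type u'} [Category.{v'} A₁] [HasZeroObject A₁] [HasShift A₁ ℤ]
  [Preadditive A₁] [∀ n : ℤ, (shiftFunctor A₁ n).Additive] [Pretriangulated A₁]
  [HasBinaryBiproducts A₁]

variable {A₂ : Type u'} [Category.{v'} A₂] [HasZeroObject A₂] [HasShift A₂ ℤ]
  [Preadditive A₂] [∀ n : ℤ, (shiftFunctor A₂ n).Additive] [Pretriangulated A₂]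
  [HasBinaryBiproducts A₂]

/-- depth-one triangulated Lusternik–Schnirelmann bound: if `j₁ : A₁ ⥤ C`
and `j₂ : A₂ ⥤ C` are exact functors whose values are generated in times `k₁` and `k₂` by
`G₁` and `G₂` respectively, and if every object of `C` lies in `⟨⟨Im j₁⟩ * ⟨Im j₂⟩⟩`, then
every object of `C` lies in `⟨{G₁ ⊞ G₂}⟩ₖ₁₊ₖ₂₊₂`; in particular `Rdim(C) ≤ k₁ + k₂ + 1`. -/
theorem statement4 (j₁ : A₁ ⥤ C) [j₁.Additive] [j₁.CommShift ℤ] [j₁.IsTriangulated]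
    (j₂ : A₂ ⥤ C) [j₂.Additive] [j₂.CommShift ℤ] [j₂.IsTriangulated]
    (G₁ G₂ : C) (k₁ k₂ : ℕ)
    (hj₁ : ∀ X : A₁, j₁.obj X ∈ level {G₁} (k₁ + 1))
    (hj₂ : ∀ Y : A₂, j₂.obj Y ∈ level {G₂} (k₂ + 1))
    (hcover : ∀ Z : C, Z ∈ cl (star (cl j₁.essImage) (cl j₂.essImage))) :
    (∀ Z : C, Z ∈ level {G₁ ⊞ G₂} (k₁ + k₂ + 2)) ∧
    rdim C ≤ (k₁ : ℕ∞) + k₂ + 1 := by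
  have h₁ : G₁ ∈ cl {G₁ ⊞ G₂} :=
    closure.summand biprod.inl biprod.fst (by simp) (closure.of rfl)
  have h₂ : G₂ ∈ cl {G₁ ⊞ G₂} :=
    closure.summand biprod.inr biprod.snd (by simp) (closure.of rfl)
  have key : ∀ Z : C, Z ∈ level {G₁ ⊞ G₂} (k₁ + k₂ + 2) := fun Z => by
    refine cl_subset (isThickish_level _ _) ?_ (hcover Z)
    rw [show k₁ + k₂ + 2 = k₁ + 1 + (k₂ + 1) by omega]
    exact (star_mono (cl_essImage_subset_level j₁ h₁ hj₁)
      (cl_essImage_subset_level j₂ h₂ hj₂)).trans (star_level_level _ _ _)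
  exact ⟨key, sInf_le ⟨k₁ + k₂ + 1, by push_cast; rfl, G₁ ⊞ G₂, key⟩⟩

end RouquierDim
end
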